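/- (Theorem 1, analytic real-exponent form.) Let μ ∈ ℝ, σ > 0, and c₁ ∈ ℝ with |μ·σ| ≤ c₁. Then for every t ∈ ℝ, (1 − (Φ(μ+σ) − Φ(μ−σ)))^(exp(D(μ,σ) + t)) ≤ exp(−exp(t)·√(2/π)·exp(−c₁ − 1/2)), where the left-hand side is the real power of the nonnegative base 1 − (Φ(μ+σ) − Φ(μ−σ)) with real exponent exp(D(μ,σ) + t). -/

import Mathlib

/-!
Write `Q = Φ(μ+σ) − Φ(μ−σ)`, the Gaussian mass of `[μ−σ, μ+σ]`. On this interval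
`x² ≤ μ² + σ² + 2|μσ|`, so the density is at least its value at the far endpoint and
`Q ≥ √(2/π)·σ·exp(−(μ²+σ²)/2 − |μσ|)` (`stdCdf_sub_ge`). Since
`exp D(μ,σ) = σ⁻¹·exp((μ²+σ²−1)/2)` (`exp_gaussKL`), the factors `σ` and `exp((μ²+σ²)/2)` cancel
in the product `Q·exp D(μ,σ)`, which is therefore at least `√(2/π)·exp(−|μσ| − 1/2)`.
The claim follows from `1 − Q ≤ exp(−Q)`, raised to the power `exp(D(μ,σ) + t)`; this is
legitimate because `0 ≤ 1 − Q`, the total mass of the density being one.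
-/

open MeasureTheory ProbabilityTheory Real

/-- The standard normal density φ(x) = (1/√(2π))·exp(−x²/2). -/
noncomputable def stdPdf (x : ℝ) : ℝ := (Real.sqrt (2 * Real.pi))⁻¹ * Real.exp (-x ^ 2 / 2)

/-- The standard normal CDF Φ(x) = ∫_{−∞}^{x} φ(u) du. -/
noncomputable def stdCdf (x : ℝ) : ℝ := ∫ u in Set.Iic x, stdPdf u

/-- KL divergence of N(μ,σ²) from N(0,1):
D(μ,σ) = (1/2)·(μ² + σ² − log(σ²) − 1). -/
noncomputable def gaussKL (μ σ : ℝ) : ℝ := (1 / 2) * (μ ^ 2 + σ ^ 2 - Real.log (σ ^ 2) - 1)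

/-- The product measure of K independent standard Gaussians on (Fin K → ℝ). -/
noncomputable def piGauss (K : ℕ) : Measure (Fin K → ℝ) :=
  Measure.pi fun _ => gaussianReal 0 1

/-- The large-error event A(μ,σ): no codeword lies strictly within distance σ of μ. -/
def largeError (K : ℕ) (μ σ : ℝ) : Set (Fin K → ℝ) := {c | ∀ j, σ ≤ |c j - μ|}

lemma stdPdf_eq_gaussianPDFReal : stdPdf = gaussianPDFReal 0 1 := by
  ext x
  simp [stdPdf, gaussianPDFReal]

lemma integrable_stdPdf : Integrable stdPdf := by
  rw [stdPdf_eq_gaussianPDFReal]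
  exact integrable_gaussianPDFReal 0 1

lemma stdPdf_nonneg (x : ℝ) : 0 ≤ stdPdf x := by
  unfold stdPdf
  positivity

lemma stdCdf_nonneg (x : ℝ) : 0 ≤ stdCdf x :=
  integral_nonneg stdPdf_nonneg

lemma stdCdf_le_one (x : ℝ) : stdCdf x ≤ 1 := by
  have h : ∫ u, stdPdf u = 1 := by
    rw [stdPdf_eq_gaussianPDFReal]
    exact integral_gaussianPDFReal_eq_one 0 one_ne_zero
  rw [← h]
  exact setIntegral_le_integral integrable_stdPdf (Filter.Eventually.of_forall stdPdf_nonneg)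

lemma inv_sqrt_two_pi_mul_two : (√(2 * π))⁻¹ * 2 = √(2 / π) := by
  have h2 : √2 * √2 = 2 := Real.mul_self_sqrt (by norm_num)
  have h3 : √2 ≠ 0 := by positivity
  have h4 : √π ≠ 0 := by positivity
  rw [Real.sqrt_mul (by norm_num), Real.sqrt_div (by norm_num)]
  field_simp
  linarith

lemma stdCdf_sub_ge (μ σ : ℝ) (hσ : 0 < σ) :
    √(2 / π) * (σ * exp (-(μ ^ 2 + σ ^ 2) / 2 - |μ * σ|)) ≤
      stdCdf (μ + σ) - stdCdf (μ - σ) := by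
  have hle : μ - σ ≤ μ + σ := by linarith
  have hQ : stdCdf (μ + σ) - stdCdf (μ - σ) = ∫ x in (μ - σ)..(μ + σ), stdPdf x :=
    intervalIntegral.integral_Iic_sub_Iic integrable_stdPdf.integrableOn
      integrable_stdPdf.integrableOn
  have hmono := intervalIntegral.integral_mono_on (μ := volume) hle
    (f := fun _ => (√(2 * π))⁻¹ * exp (-(μ ^ 2 + σ ^ 2) / 2 - |μ * σ|)) (g := stdPdf)
    intervalIntegrable_const integrable_stdPdf.intervalIntegrable (by
      intro x hx
      have hx1 : |x - μ| ≤ σ := abs_le.2 ⟨by linarith [hx.1], by linarith [hx.2]⟩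
      have hsq : (x - μ) ^ 2 ≤ σ ^ 2 := by
        rw [← sq_abs (x - μ)]
        gcongr
      have hcross : μ * (x - μ) ≤ |μ * σ| := by
        refine (le_abs_self _).trans ?_
        rw [abs_mul, abs_mul, abs_of_pos hσ]
        gcongr
      unfold stdPdf
      gcongr
      nlinarith)
  rw [hQ, ← inv_sqrt_two_pi_mul_two]
  refine le_trans (le_of_eq ?_) hmono
  rw [intervalIntegral.integral_const, smul_eq_mul]
  ring

lemma exp_gaussKL (μ σ : ℝ) (hσ : 0 < σ) :
    exp (gaussKL μ σ) = σ⁻¹ * exp ((μ ^ 2 + σ ^ 2) / 2 - 1 / 2) := by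
  have h : gaussKL μ σ = -Real.log σ + ((μ ^ 2 + σ ^ 2) / 2 - 1 / 2) := by
    unfold gaussKL
    rw [Real.log_pow]
    push_cast
    ring
  rw [h, exp_add, exp_neg, exp_log hσ]

theorem stmt10 (μ σ c₁ : ℝ) (hσ : 0 < σ) (hc₁ : |μ * σ| ≤ c₁) (t : ℝ) :
    (1 - (stdCdf (μ + σ) - stdCdf (μ - σ))) ^ Real.exp (gaussKL μ σ + t) ≤
      Real.exp (-Real.exp t * (Real.sqrt (2 / Real.pi) *
        Real.exp (-c₁ - 1 / 2))) := by
  have hQ := stdCdf_sub_ge μ σ hσ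
  have hbase : 0 ≤ 1 - (stdCdf (μ + σ) - stdCdf (μ - σ)) := by
    linarith [stdCdf_le_one (μ + σ), stdCdf_nonneg (μ - σ)]
  set Q := stdCdf (μ + σ) - stdCdf (μ - σ)
  have hprod : √(2 / π) * exp (-c₁ - 1 / 2) ≤ Q * exp (gaussKL μ σ) := by
    calc √(2 / π) * exp (-c₁ - 1 / 2)
        ≤ √(2 / π) * exp (-|μ * σ| - 1 / 2) := by gcongr
      _ = √(2 / π) * (σ * exp (-(μ ^ 2 + σ ^ 2) / 2 - |μ * σ|)) * exp (gaussKL μ σ) := by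
          have hsplit : -|μ * σ| - 1 / 2 =
              (-(μ ^ 2 + σ ^ 2) / 2 - |μ * σ|) + ((μ ^ 2 + σ ^ 2) / 2 - 1 / 2) := by ring
          rw [exp_gaussKL μ σ hσ, hsplit, exp_add]
          field_simp
      _ ≤ Q * exp (gaussKL μ σ) := by gcongr
  calc (1 - Q) ^ exp (gaussKL μ σ + t)
      ≤ exp (-Q) ^ exp (gaussKL μ σ + t) :=
        Real.rpow_le_rpow hbase (one_sub_le_exp_neg Q) (exp_pos _).le
    _ = exp (-exp t * (Q * exp (gaussKL μ σ))) := by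
        rw [← exp_mul, exp_add]
        congr 1
        ring
    _ ≤ exp (-exp t * (√(2 / π) * exp (-c₁ - 1 / 2))) :=
        exp_le_exp.2 (mul_le_mul_of_nonpos_left hprod (neg_nonpos.2 (exp_pos t).le))
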